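/- Let A be a Hopf algebra and (H, Δ, Δ') a commutative Hopf brace with antipode S for Δ. Suppose (A, H, ρ, φ) is a Hopf matched pair (with H carrying Δ), and (A, ρ') is a left H_{Δ'}-comodule bialgebra with coaction ρ'(a) = a_{(-1)'} ⊗ a_{(0)'}. Let A ⋈ H be the bicrossed coproduct of the matched pair, with comultiplication Δ̃, and let Δ̄ be the smash coproduct comultiplication on A ⊗ H_{Δ'}: Δ̄(a ⊗ h) = a_1 ⊗ a_{2(-1)'} h_{1'} ⊗ a_{2(0)'} ⊗ h_{2'}. Then (A ⋈ H, Δ̃, Δ̄) is a Hopf brace if and only if for all a ∈ A and h ∈ H: (4.2) a_{(-1)'} ⊗ a_{(0)'(-1)} ⊗ a_{(0)'(0)} = a_{(-1)11'} S(a_{(-1)2}) a_{(0)(-1)'} ⊗ a_{(-1)12'} ⊗ a_{(0)(0)'}, and (4.3) h_{1'} ⊗ h_{2'[0]} ⊗ h_{2'[1]} = h_{1[0]11'} S(h_{1[0]2}) h_{1[1](-1)'} h_2 ⊗ h_{1[0]12'} ⊗ h_{1[1](0)'}. -/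

import Mathlib

open TensorProduct

noncomputable section

namespace HopfPaper

/-- A Hopf algebra structure (comultiplication `Δ`, counit `ε`, antipode `S`) on a
given `k`-algebra `H`, expressed in terms of `k`-linear maps.  Together with the
algebra structure of `H` this is exactly the data of a Hopf algebra
`(H, m, 1, Δ, ε, S)` over the field `k`. -/
structure HopfStruct (k : Type*) [Field k] (H : Type*) [Ring H] [Algebra k H] where
  /-- the comultiplication -/
  Δ : H →ₗ[k] H ⊗[k] H
  /-- the counit -/
  ε : H →ₗ[k] k
  /-- the antipode -/
  S : H →ₗ[k] H
  coassoc : ∀ h : H,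
    TensorProduct.map (LinearMap.id : H →ₗ[k] H) Δ (Δ h)
      = TensorProduct.assoc k H H H
          (TensorProduct.map Δ (LinearMap.id : H →ₗ[k] H) (Δ h))
  counit_left : ∀ h : H,
    TensorProduct.lid k H (TensorProduct.map ε (LinearMap.id : H →ₗ[k] H) (Δ h)) = h
  counit_right : ∀ h : H,
    TensorProduct.rid k H (TensorProduct.map (LinearMap.id : H →ₗ[k] H) ε (Δ h)) = h
  comul_mul : ∀ a b : H, Δ (a * b) = Δ a * Δ b
  comul_one : Δ 1 = 1
  counit_mul : ∀ a b : H, ε (a * b) = ε a * ε b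
  counit_one : ε 1 = 1
  antipode_left : ∀ h : H,
    LinearMap.mul' k H (TensorProduct.map S (LinearMap.id : H →ₗ[k] H) (Δ h))
      = algebraMap k H (ε h)
  antipode_right : ∀ h : H,
    LinearMap.mul' k H (TensorProduct.map (LinearMap.id : H →ₗ[k] H) S (Δ h))
      = algebraMap k H (ε h)

variable (k : Type*) [Field k]

/-- `m ↦ m ⊗ 1`. -/
def ι₁ (M N : Type*) [Ring M] [Algebra k M] [Ring N] [Algebra k N] :
    M →ₗ[k] M ⊗[k] N :=
  (TensorProduct.mk k M N).flip 1

/-- `n ↦ 1 ⊗ n`. -/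
def ι₂ (M N : Type*) [Ring M] [Algebra k M] [Ring N] [Algebra k N] :
    N →ₗ[k] M ⊗[k] N :=
  TensorProduct.mk k M N 1

/-- multiplication of three factors, `x ⊗ (y ⊗ z) ↦ x * y * z`. -/
def mul₃ (T : Type*) [Ring T] [Algebra k T] : T ⊗[k] (T ⊗[k] T) →ₗ[k] T :=
  (LinearMap.mul' k T).comp
    (TensorProduct.map (LinearMap.id : T →ₗ[k] T) (LinearMap.mul' k T))

/-- multiplication of four factors. -/
def mul₄ (T : Type*) [Ring T] [Algebra k T] :
    T ⊗[k] (T ⊗[k] (T ⊗[k] T)) →ₗ[k] T :=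
  (LinearMap.mul' k T).comp
    (TensorProduct.map (LinearMap.id : T →ₗ[k] T) (mul₃ k T))

/-- The left hand side `h_{1'} ⊗ h_{2'1} ⊗ h_{2'2}` of the Hopf brace compatibility
condition (2.1), i.e. `(id ⊗ Δ) ∘ Δ'`. -/
def braceLHS (H : Type*) [Ring H] [Algebra k H] (Δ Δ' : H →ₗ[k] H ⊗[k] H) :
    H →ₗ[k] H ⊗[k] (H ⊗[k] H) :=
  (TensorProduct.map (LinearMap.id : H →ₗ[k] H) Δ).comp Δ'

/-- The right hand side `h_{11'}S(h_2)h_{31'} ⊗ h_{12'} ⊗ h_{32'}` of the Hopf brace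
compatibility condition (2.1):  it is obtained from the twofold comultiplication
`h ↦ h_1 ⊗ (h_2 ⊗ h_3)` (using `Δ`) by applying `Δ'` to the first and third legs,
`S` to the middle leg, placing the results in the appropriate tensor positions of
`H ⊗ (H ⊗ H)` (filled with `1`s) and multiplying. -/
def braceRHS (H : Type*) [Ring H] [Algebra k H] (Δ Δ' : H →ₗ[k] H ⊗[k] H)
    (S : H →ₗ[k] H) : H →ₗ[k] H ⊗[k] (H ⊗[k] H) :=
  (mul₃ k (H ⊗[k] (H ⊗[k] H))).comp
    ((TensorProduct.map
        ((TensorProduct.map (LinearMap.id : H →ₗ[k] H) (ι₁ k H H)).comp Δ')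
        (TensorProduct.map ((ι₁ k H (H ⊗[k] H)).comp S)
          ((TensorProduct.map (LinearMap.id : H →ₗ[k] H) (ι₂ k H H)).comp Δ'))).comp
      ((TensorProduct.map (LinearMap.id : H →ₗ[k] H) Δ).comp Δ))

/-- A Hopf brace on the `k`-algebra `H` : two Hopf algebra structures sharing the
multiplication and unit of `H`, subject to the compatibility condition (2.1):
`h_{1'} ⊗ h_{2'1} ⊗ h_{2'2} = h_{11'}S(h_2)h_{31'} ⊗ h_{12'} ⊗ h_{32'}`. -/
structure HopfBrace (H : Type*) [Ring H] [Algebra k H] where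
  fst : HopfStruct k H
  snd : HopfStruct k H
  compat : ∀ h : H,
    braceLHS k H fst.Δ snd.Δ h = braceRHS k H fst.Δ snd.Δ fst.S h

/-- The coaction `ρ(h) = S(h_1) h_{21'} ⊗ h_{22'}` of Lemma 2.5. -/
def ρmap (H : Type*) [Ring H] [Algebra k H] (Δ Δ' : H →ₗ[k] H ⊗[k] H)
    (S : H →ₗ[k] H) : H →ₗ[k] H ⊗[k] H :=
  (LinearMap.mul' k (H ⊗[k] H)).comp
    ((TensorProduct.map ((ι₁ k H H).comp S) Δ').comp Δ)

/-- The coaction `φ(a) = (T(a_{1'}))_{(-1)} a_{2'} ⊗ (T(a_{1'}))_{(0)} a_{3'}`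
of Lemma 2.8(2), where `x_{(-1)} ⊗ x_{(0)} = ρ(x)`. -/
def φmap (H : Type*) [Ring H] [Algebra k H] (Δ Δ' : H →ₗ[k] H ⊗[k] H)
    (S T : H →ₗ[k] H) : H →ₗ[k] H ⊗[k] H :=
  (LinearMap.mul' k (H ⊗[k] H)).comp
    ((TensorProduct.map ((ρmap k H Δ Δ' S).comp T)
        (LinearMap.id : H ⊗[k] H →ₗ[k] H ⊗[k] H)).comp
      ((TensorProduct.map (LinearMap.id : H →ₗ[k] H) Δ').comp Δ'))

/-- `ρ : A →ₗ H ⊗ A` is a coassociative counital left coaction of the coalgebra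
`(H, ΔH, εH)`. -/
def LeftCoaction (A H : Type*) [Ring A] [Algebra k A] [Ring H] [Algebra k H]
    (ΔH : H →ₗ[k] H ⊗[k] H) (εH : H →ₗ[k] k) (ρ : A →ₗ[k] H ⊗[k] A) : Prop :=
  (∀ a : A,
    TensorProduct.map (LinearMap.id : H →ₗ[k] H) ρ (ρ a)
      = TensorProduct.assoc k H H A
          (TensorProduct.map ΔH (LinearMap.id : A →ₗ[k] A) (ρ a))) ∧
  (∀ a : A,
    TensorProduct.lid k A (TensorProduct.map εH (LinearMap.id : A →ₗ[k] A) (ρ a)) = a)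

/-- `φ : H →ₗ H ⊗ A` is a coassociative counital right coaction of the coalgebra
`(A, ΔA, εA)`. -/
def RightCoaction (A H : Type*) [Ring A] [Algebra k A] [Ring H] [Algebra k H]
    (ΔA : A →ₗ[k] A ⊗[k] A) (εA : A →ₗ[k] k) (φ : H →ₗ[k] H ⊗[k] A) : Prop :=
  (∀ h : H,
    TensorProduct.map (LinearMap.id : H →ₗ[k] H) ΔA (φ h)
      = TensorProduct.assoc k H A A
          (TensorProduct.map φ (LinearMap.id : A →ₗ[k] A) (φ h))) ∧
  (∀ h : H,
    TensorProduct.rid k H (TensorProduct.map (LinearMap.id : H →ₗ[k] H) εA (φ h)) = h)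

/-- a linear map which is moreover multiplicative and unital. -/
def IsAlgebraMorphism (M N : Type*) [Ring M] [Algebra k M] [Ring N] [Algebra k N]
    (f : M →ₗ[k] N) : Prop :=
  (∀ a b : M, f (a * b) = f a * f b) ∧ f 1 = 1

/-- `a ↦ a_{1(-1)} a_{2(-1)} ⊗ a_{1(0)} ⊗ a_{2(0)}`, the right hand side of the
comodule coalgebra condition. -/
def comodCoalgRHS (A H : Type*) [Ring A] [Algebra k A] [Ring H] [Algebra k H]
    (ΔA : A →ₗ[k] A ⊗[k] A) (ρ : A →ₗ[k] H ⊗[k] A) :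
    A →ₗ[k] H ⊗[k] (A ⊗[k] A) :=
  (LinearMap.mul' k (H ⊗[k] (A ⊗[k] A))).comp
    ((TensorProduct.map
        ((TensorProduct.map (LinearMap.id : H →ₗ[k] H) (ι₁ k A A)).comp ρ)
        ((TensorProduct.map (LinearMap.id : H →ₗ[k] H) (ι₂ k A A)).comp ρ)).comp ΔA)

/-- The two conditions making a left `H`-comodule `(A, ρ)` a comodule coalgebra:
`a_{(-1)} ⊗ Δ(a_{(0)}) = a_{1(-1)} a_{2(-1)} ⊗ a_{1(0)} ⊗ a_{2(0)}` and
`a_{(-1)} ε(a_{(0)}) = ε(a) 1`. -/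
def IsComodCoalg (A H : Type*) [Ring A] [Algebra k A] [Ring H] [Algebra k H]
    (ΔA : A →ₗ[k] A ⊗[k] A) (εA : A →ₗ[k] k) (ρ : A →ₗ[k] H ⊗[k] A) : Prop :=
  (∀ a : A,
    TensorProduct.map (LinearMap.id : H →ₗ[k] H) ΔA (ρ a)
      = comodCoalgRHS k A H ΔA ρ a) ∧
  (∀ a : A,
    TensorProduct.rid k H (TensorProduct.map (LinearMap.id : H →ₗ[k] H) εA (ρ a))
      = algebraMap k H (εA a))

/-- `a ↦ a_{1(-1)} a_{2(-1)[0]} ⊗ a_{1(0)} a_{2(-1)[1]} ⊗ a_{2(0)}`, the right hand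
side of (HM2). -/
def HM2RHS (A H : Type*) [Ring A] [Algebra k A] [Ring H] [Algebra k H]
    (ΔA : A →ₗ[k] A ⊗[k] A) (ρ : A →ₗ[k] H ⊗[k] A) (φ : H →ₗ[k] H ⊗[k] A) :
    A →ₗ[k] H ⊗[k] (A ⊗[k] A) :=
  (LinearMap.mul' k (H ⊗[k] (A ⊗[k] A))).comp
    ((TensorProduct.map
        ((TensorProduct.map (LinearMap.id : H →ₗ[k] H) (ι₁ k A A)).comp ρ)
        ((TensorProduct.assoc k H A A).toLinearMap.comp
          ((TensorProduct.map φ (LinearMap.id : A →ₗ[k] A)).comp ρ))).comp ΔA)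

/-- `h ↦ h_{1[0]} ⊗ h_{1[1](-1)} h_{2[0]} ⊗ h_{1[1](0)} h_{2[1]}`, the right hand
side of (HM3). -/
def HM3RHS (A H : Type*) [Ring A] [Algebra k A] [Ring H] [Algebra k H]
    (ΔH : H →ₗ[k] H ⊗[k] H) (ρ : A →ₗ[k] H ⊗[k] A) (φ : H →ₗ[k] H ⊗[k] A) :
    H →ₗ[k] H ⊗[k] (H ⊗[k] A) :=
  (LinearMap.mul' k (H ⊗[k] (H ⊗[k] A))).comp
    ((TensorProduct.map
        ((TensorProduct.map (LinearMap.id : H →ₗ[k] H) ρ).comp φ)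
        ((ι₂ k H (H ⊗[k] A)).comp φ)).comp ΔH)

/-- A Hopf matched pair `(A, H)` (Definition 3.1): `ρ` makes `A` a left
`H`-comodule algebra, `φ` makes `H` a right `A`-comodule algebra, and the
compatibility conditions (HM1)–(HM4) hold. -/
def IsHopfMatchedPair (A H : Type*) [Ring A] [Algebra k A] [Ring H] [Algebra k H]
    (ΔA : A →ₗ[k] A ⊗[k] A) (εA : A →ₗ[k] k)
    (ΔH : H →ₗ[k] H ⊗[k] H) (εH : H →ₗ[k] k)
    (ρ : A →ₗ[k] H ⊗[k] A) (φ : H →ₗ[k] H ⊗[k] A) : Prop :=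
  LeftCoaction k A H ΔH εH ρ ∧
  IsAlgebraMorphism k A (H ⊗[k] A) ρ ∧
  RightCoaction k A H ΔA εA φ ∧
  IsAlgebraMorphism k H (H ⊗[k] A) φ ∧
  -- (HM1)
  (∀ a : A,
    TensorProduct.rid k H (TensorProduct.map (LinearMap.id : H →ₗ[k] H) εA (ρ a))
      = algebraMap k H (εA a)) ∧
  (∀ h : H,
    TensorProduct.lid k A (TensorProduct.map εH (LinearMap.id : A →ₗ[k] A) (φ h))
      = algebraMap k A (εH h)) ∧
  -- (HM2)
  (∀ a : A,
    TensorProduct.map (LinearMap.id : H →ₗ[k] H) ΔA (ρ a) = HM2RHS k A H ΔA ρ φ a) ∧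
  -- (HM3)
  (∀ h : H,
    TensorProduct.assoc k H H A
        (TensorProduct.map ΔH (LinearMap.id : A →ₗ[k] A) (φ h))
      = HM3RHS k A H ΔH ρ φ h) ∧
  -- (HM4)
  (∀ (a : A) (h : H), φ h * ρ a = ρ a * φ h)

/-- Equation (3.2): `Δ(a) = a_{1'} T(a_{2'(-1)}) ⊗ a_{2'(0)}`. -/
def Δfromρ (A : Type*) [Ring A] [Algebra k A] (Δ' : A →ₗ[k] A ⊗[k] A)
    (T : A →ₗ[k] A) (ρ : A →ₗ[k] A ⊗[k] A) : A →ₗ[k] A ⊗[k] A :=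
  (LinearMap.mul' k (A ⊗[k] A)).comp
    ((TensorProduct.map (ι₁ k A A)
        ((TensorProduct.map T (LinearMap.id : A →ₗ[k] A)).comp ρ)).comp Δ')

/-- Equation (3.3): `S(a) = a_{(-1)} T(a_{(0)})`. -/
def Sfromρ (A : Type*) [Ring A] [Algebra k A] (T : A →ₗ[k] A)
    (ρ : A →ₗ[k] A ⊗[k] A) : A →ₗ[k] A :=
  (LinearMap.mul' k A).comp
    ((TensorProduct.map (LinearMap.id : A →ₗ[k] A) T).comp ρ)

/-- The comultiplication `Δ_R(h) = R · Δ(h) · R⁻¹` obtained by conjugating `Δ` with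
an invertible element `R ∈ H ⊗ H`. -/
def conjComul (H : Type*) [Ring H] [Algebra k H] (R Rinv : H ⊗[k] H)
    (Δ : H →ₗ[k] H ⊗[k] H) : H →ₗ[k] H ⊗[k] H :=
  (LinearMap.mulLeft k R).comp ((LinearMap.mulRight k Rinv).comp Δ)

/-- The braiding candidate `c(x ⊗ y) = x_{(-1)} y_{[0]} ⊗ x_{(0)} y_{[1]}` of
Proposition 2.9, i.e. `c = mult ∘ (ρ ⊗ φ)`. -/
def cmap (A : Type*) [Ring A] [Algebra k A] (Δ Δ' : A →ₗ[k] A ⊗[k] A)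
    (S T : A →ₗ[k] A) : A ⊗[k] A →ₗ[k] A ⊗[k] A :=
  (LinearMap.mul' k (A ⊗[k] A)).comp
    (TensorProduct.map (ρmap k A Δ Δ' S) (φmap k A Δ Δ' S T))

/-- `γ(x ⊗ y) = x y_{(-1)} ⊗ y_{(0)}` for a coaction `ρ(y) = y_{(-1)} ⊗ y_{(0)}`. -/
def γmap (A : Type*) [Ring A] [Algebra k A] (ρ : A →ₗ[k] A ⊗[k] A) :
    A ⊗[k] A →ₗ[k] A ⊗[k] A :=
  (LinearMap.mul' k (A ⊗[k] A)).comp (TensorProduct.map (ι₁ k A A) ρ)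

/-- `σ(x ⊗ y) = y_2 ⊗ x S(y_1) y_3`. -/
def σmap (A : Type*) [Ring A] [Algebra k A] (Δ : A →ₗ[k] A ⊗[k] A)
    (S : A →ₗ[k] A) : A ⊗[k] A →ₗ[k] A ⊗[k] A :=
  (mul₄ k (A ⊗[k] A)).comp
    ((TensorProduct.map (ι₂ k A A)
        (TensorProduct.map ((ι₂ k A A).comp S)
          (TensorProduct.map (ι₁ k A A) (ι₂ k A A)))).comp
      (TensorProduct.map (LinearMap.id : A →ₗ[k] A)
        ((TensorProduct.map (LinearMap.id : A →ₗ[k] A) Δ).comp Δ)))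

/-- The usual tensor product comultiplication `Δ̂` on `A ⊗ H`:
`a ⊗ h ↦ (a_1 ⊗ h_1) ⊗ (a_2 ⊗ h_2)`. -/
def hatΔ (A H : Type*) [Ring A] [Algebra k A] [Ring H] [Algebra k H]
    (ΔA : A →ₗ[k] A ⊗[k] A) (ΔH : H →ₗ[k] H ⊗[k] H) :
    A ⊗[k] H →ₗ[k] (A ⊗[k] H) ⊗[k] (A ⊗[k] H) :=
  (TensorProduct.tensorTensorTensorComm k A A H H).toLinearMap.comp
    (TensorProduct.map ΔA ΔH)

/-- The bicrossed coproduct comultiplication on `A ⊗ H`: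
`Δ̃(a ⊗ h) = a_1 ⊗ a_{2(-1)} h_{1[0]} ⊗ a_{2(0)} h_{1[1]} ⊗ h_2`. -/
def bicrossΔ (A H : Type*) [Ring A] [Algebra k A] [Ring H] [Algebra k H]
    (ΔA : A →ₗ[k] A ⊗[k] A) (ΔH : H →ₗ[k] H ⊗[k] H)
    (ρ : A →ₗ[k] H ⊗[k] A) (φ : H →ₗ[k] H ⊗[k] A) :
    A ⊗[k] H →ₗ[k] (A ⊗[k] H) ⊗[k] (A ⊗[k] H) :=
  (LinearMap.mul' k ((A ⊗[k] H) ⊗[k] (A ⊗[k] H))).comp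
    (TensorProduct.map
      -- a ↦ (a_1 ⊗ a_{2(-1)}) ⊗ (a_{2(0)} ⊗ 1)
      ((TensorProduct.map (LinearMap.id : A ⊗[k] H →ₗ[k] A ⊗[k] H) (ι₁ k A H)).comp
        ((TensorProduct.assoc k A H A).symm.toLinearMap.comp
          ((TensorProduct.map (LinearMap.id : A →ₗ[k] A) ρ).comp ΔA)))
      -- h ↦ (1 ⊗ h_{1[0]}) ⊗ (h_{1[1]} ⊗ h_2)
      ((TensorProduct.map (ι₂ k A H) (LinearMap.id : A ⊗[k] H →ₗ[k] A ⊗[k] H)).comp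
        ((TensorProduct.assoc k H A H).toLinearMap.comp
          ((TensorProduct.map φ (LinearMap.id : H →ₗ[k] H)).comp ΔH))))

/-- The antipode of the bicrossed coproduct:
`S̃(a ⊗ h) = S_A(h_{[1]}) S_A(a_{(0)}) ⊗ S_H(h_{[0]}) S_H(a_{(-1)})`. -/
def bicrossS (A H : Type*) [Ring A] [Algebra k A] [Ring H] [Algebra k H]
    (SA : A →ₗ[k] A) (SH : H →ₗ[k] H)
    (ρ : A →ₗ[k] H ⊗[k] A) (φ : H →ₗ[k] H ⊗[k] A) :
    A ⊗[k] H →ₗ[k] A ⊗[k] H :=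
  (LinearMap.mul' k (A ⊗[k] H)).comp
    ((TensorProduct.map
        ((TensorProduct.map SA SH).comp ((TensorProduct.comm k H A).toLinearMap.comp φ))
        ((TensorProduct.map SA SH).comp ((TensorProduct.comm k H A).toLinearMap.comp ρ))).comp
      (TensorProduct.comm k A H).toLinearMap)

/-- The left hand side `h_{[0]} ⊗ h_{[1]1} ⊗ h_{[1]2}` of equation (4.1), where the
`A`-leg is comultiplied with `Δ'`. -/
def eq41LHS (A H : Type*) [Ring A] [Algebra k A] [Ring H] [Algebra k H]
    (Δ'A : A →ₗ[k] A ⊗[k] A) (φ : H →ₗ[k] H ⊗[k] A) :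
    H →ₗ[k] H ⊗[k] (A ⊗[k] A) :=
  (TensorProduct.map (LinearMap.id : H →ₗ[k] H) Δ'A).comp φ

/-- The right hand side `h_{1[0]} S(h_2) h_{3[0]} ⊗ h_{1[1]} ⊗ h_{3[1]}` of
equation (4.1). -/
def eq41RHS (A H : Type*) [Ring A] [Algebra k A] [Ring H] [Algebra k H]
    (ΔH : H →ₗ[k] H ⊗[k] H) (SH : H →ₗ[k] H) (φ : H →ₗ[k] H ⊗[k] A) :
    H →ₗ[k] H ⊗[k] (A ⊗[k] A) :=
  (mul₃ k (H ⊗[k] (A ⊗[k] A))).comp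
    ((TensorProduct.map
        ((TensorProduct.map (LinearMap.id : H →ₗ[k] H) (ι₁ k A A)).comp φ)
        (TensorProduct.map ((ι₁ k H (A ⊗[k] A)).comp SH)
          ((TensorProduct.map (LinearMap.id : H →ₗ[k] H) (ι₂ k A A)).comp φ))).comp
      ((TensorProduct.map (LinearMap.id : H →ₗ[k] H) ΔH).comp ΔH))

/-- `x ↦ x_{11'} S(x_2) ⊗ x_{12'} ⊗ 1 ∈ H ⊗ (H ⊗ A)`, an auxiliary map for
equations (4.2) and (4.3). -/
def LHmap (A H : Type*) [Ring A] [Algebra k A] [Ring H] [Algebra k H]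
    (ΔH Δ'H : H →ₗ[k] H ⊗[k] H) (SH : H →ₗ[k] H) :
    H →ₗ[k] H ⊗[k] (H ⊗[k] A) :=
  (LinearMap.mul' k (H ⊗[k] (H ⊗[k] A))).comp
    ((TensorProduct.map
        ((TensorProduct.map (LinearMap.id : H →ₗ[k] H) (ι₁ k H A)).comp Δ'H)
        ((ι₁ k H (H ⊗[k] A)).comp SH)).comp ΔH)

/-- The right hand side
`a_{(-1)11'} S(a_{(-1)2}) a_{(0)(-1)'} ⊗ a_{(-1)12'} ⊗ a_{(0)(0)'}` of
equation (4.2). -/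
def eq42RHS (A H : Type*) [Ring A] [Algebra k A] [Ring H] [Algebra k H]
    (ΔH Δ'H : H →ₗ[k] H ⊗[k] H) (SH : H →ₗ[k] H)
    (ρ ρ' : A →ₗ[k] H ⊗[k] A) :
    A →ₗ[k] H ⊗[k] (H ⊗[k] A) :=
  (LinearMap.mul' k (H ⊗[k] (H ⊗[k] A))).comp
    ((TensorProduct.map (LHmap k A H ΔH Δ'H SH)
        ((TensorProduct.map (LinearMap.id : H →ₗ[k] H) (ι₂ k H A)).comp ρ')).comp ρ)

/-- The right hand side
`h_{1[0]11'} S(h_{1[0]2}) h_{1[1](-1)'} h_2 ⊗ h_{1[0]12'} ⊗ h_{1[1](0)'}` of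
equation (4.3). -/
def eq43RHS (A H : Type*) [Ring A] [Algebra k A] [Ring H] [Algebra k H]
    (ΔH Δ'H : H →ₗ[k] H ⊗[k] H) (SH : H →ₗ[k] H)
    (ρ' : A →ₗ[k] H ⊗[k] A) (φ : H →ₗ[k] H ⊗[k] A) :
    H →ₗ[k] H ⊗[k] (H ⊗[k] A) :=
  (LinearMap.mul' k (H ⊗[k] (H ⊗[k] A))).comp
    ((TensorProduct.map
        ((LinearMap.mul' k (H ⊗[k] (H ⊗[k] A))).comp
          ((TensorProduct.map (LHmap k A H ΔH Δ'H SH)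
              ((TensorProduct.map (LinearMap.id : H →ₗ[k] H) (ι₂ k H A)).comp ρ')).comp φ))
        (ι₁ k H (H ⊗[k] A))).comp ΔH)

/-!
A comultiplication is determined by the convolution product it induces on algebra maps into test
algebras, so each identity in the statement may be checked on points with pairwise commuting
images. A point of `A ⊗ H` is a pair `(α, η)`, and with `η ▷ α` and `η ◁ α` the actions dual to `ρ`
and `φ` and `η ▷' α` the one dual to `ρ'`, the two comultiplications become the products
`(α, η) * (β, γ) = (α (η ▷ β), (η ◁ β) γ)` and `(α, η) ∘ (β, γ) = (α (η ▷' β), η ∘ γ)`.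

Write `x = (α₁, η₁)`, `y = (α₂, η₂)`, `z = (α₃, η₃)`. In `x ∘ (y * z) = (x ∘ y) * x⁻¹ * (x ∘ z)` the
factors `α₁` and `η₁ ▷' α₂` on the left of the first component and `η₁ ∘ η₃` on the right of the
second occur on both sides. Cancelling them leaves, with `p = (η₁ ∘ η₂) η₁⁻¹`,
`η₁ ▷' (η₂ ▷ α₃) = p ▷ (η₁ ▷' α₃)` and `η₁ ∘ (η₂ ◁ α₃) = (p ◁ (η₁ ▷' α₃)) η₁`,
which are (4.2) and (4.3).
-/

section Definitions

variable {k : Type*} [CommSemiring k] {X Y Z R : Type*} [AddCommMonoid X] [Module k X]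
  [AddCommMonoid Y] [Module k Y] [AddCommMonoid Z] [Module k Z] [Semiring R] [Algebra k R]

/-- The linear map `y ⊗ z ↦ f y * g z`, written `f ⊙ g`. When `f` and `g` are algebra maps out of
`A` and `H`, it is the pair `(f, g)`, viewed as a point of `A ⊗ H`. -/
def tensorMul (f : Y →ₗ[k] R) (g : Z →ₗ[k] R) : Y ⊗[k] Z →ₗ[k] R :=
  LinearMap.mul' k R ∘ₗ TensorProduct.map f g

/-- The convolution `x ↦ f x_1 * g x_2` of `f` and `g` along `δ x = x_1 ⊗ x_2`, written
`f ⋆[δ] g`. The map `δ` may be a comultiplication or a coaction. -/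
def conv (δ : X →ₗ[k] Y ⊗[k] Z) (f : Y →ₗ[k] R) (g : Z →ₗ[k] R) : X →ₗ[k] R :=
  tensorMul f g ∘ₗ δ

/-- The linear map `x ↦ ε x • 1`, the neutral element for convolution along a comultiplication
with counit `ε`. -/
def unitMap (ε : X →ₗ[k] k) : X →ₗ[k] R :=
  Algebra.linearMap k R ∘ₗ ε

/-- The linear map `f` is multiplicative and unital. This is a class so that instance resolution
carries the property through composites and convolutions. -/
class IsAlgHom {Y : Type*} [Semiring Y] [Algebra k Y] (f : Y →ₗ[k] R) : Prop where
  map_mul : ∀ x y, f (x * y) = f x * f y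
  map_one : f 1 = 1

/-- The images of `f` and `g` commute elementwise. This is a class for the same reason as
`IsAlgHom`. -/
class ImagesCommute (f : Y →ₗ[k] R) (g : Z →ₗ[k] R) : Prop where
  commute : ∀ y z, Commute (f y) (g z)

end Definitions

local infixr:72 "⊙" => tensorMul
local notation:70 f:71 "⋆[" δ "]" g:70 => conv δ f g

section Linear

variable {k : Type*} [CommSemiring k] {X Y Z W P Q R : Type*} [AddCommMonoid X] [Module k X]
  [AddCommMonoid Y] [Module k Y] [AddCommMonoid Z] [Module k Z] [AddCommMonoid W] [Module k W]
  [AddCommMonoid P] [Module k P] [AddCommMonoid Q] [Module k Q] [Semiring R] [Algebra k R]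

@[simp]
theorem tensorMul_tmul (f : Y →ₗ[k] R) (g : Z →ₗ[k] R) (y : Y) (z : Z) :
    (f ⊙ g) (y ⊗ₜ z) = f y * g z := rfl

@[simp]
theorem unitMap_apply (ε : X →ₗ[k] k) (x : X) : (unitMap ε : X →ₗ[k] R) x = algebraMap k R (ε x) :=
  rfl

theorem tensorMul_comp_map (f : Y →ₗ[k] R) (g : Z →ₗ[k] R) (u : P →ₗ[k] Y) (v : Q →ₗ[k] Z) :
    (f ⊙ g) ∘ₗ TensorProduct.map u v = (f ∘ₗ u) ⊙ (g ∘ₗ v) :=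
  TensorProduct.ext' fun _ _ => rfl

theorem tensorMul_comp_assoc (f : Y →ₗ[k] R) (g : Z →ₗ[k] R) (h : W →ₗ[k] R) :
    (f ⊙ g ⊙ h) ∘ₗ (TensorProduct.assoc k Y Z W).toLinearMap = (f ⊙ g) ⊙ h :=
  TensorProduct.ext_threefold fun _ _ _ => (mul_assoc _ _ _).symm

theorem tensorMul_comp_map_id_comp (δ₁ : X →ₗ[k] Y ⊗[k] P) (δ₂ : P →ₗ[k] Z ⊗[k] W)
    (f : Y →ₗ[k] R) (g : Z →ₗ[k] R) (h : W →ₗ[k] R) :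
    (f ⊙ g ⊙ h) ∘ₗ TensorProduct.map LinearMap.id δ₂ ∘ₗ δ₁ = f ⋆[δ₁] g ⋆[δ₂] h := by
  rw [← LinearMap.comp_assoc, tensorMul_comp_map, LinearMap.comp_id]
  rfl

theorem tensorMul_comp_map_comp_id (δ₁ : X →ₗ[k] P ⊗[k] W) (δ₂ : P →ₗ[k] Y ⊗[k] Z)
    (f : Y →ₗ[k] R) (g : Z →ₗ[k] R) (h : W →ₗ[k] R) :
    ((f ⊙ g) ⊙ h) ∘ₗ TensorProduct.map δ₂ LinearMap.id ∘ₗ δ₁ = (f ⋆[δ₂] g) ⋆[δ₁] h := by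
  rw [← LinearMap.comp_assoc, tensorMul_comp_map, LinearMap.comp_id]
  rfl

theorem tensorMul_comp_assoc_map_comp_id (δ₁ : X →ₗ[k] P ⊗[k] W) (δ₂ : P →ₗ[k] Y ⊗[k] Z)
    (f : Y →ₗ[k] R) (g : Z →ₗ[k] R) (h : W →ₗ[k] R) :
    (f ⊙ g ⊙ h) ∘ₗ (TensorProduct.assoc k Y Z W).toLinearMap ∘ₗ
      TensorProduct.map δ₂ LinearMap.id ∘ₗ δ₁ = (f ⋆[δ₂] g) ⋆[δ₁] h := by
  rw [← LinearMap.comp_assoc, tensorMul_comp_assoc, tensorMul_comp_map_comp_id]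

theorem conv_assoc {δ₁ : X →ₗ[k] Y ⊗[k] P} {δ₂ : P →ₗ[k] Z ⊗[k] W} {δ₃ : X →ₗ[k] Q ⊗[k] W}
    {δ₄ : Q →ₗ[k] Y ⊗[k] Z}
    (hδ : ∀ x, TensorProduct.map LinearMap.id δ₂ (δ₁ x)
      = TensorProduct.assoc k Y Z W (TensorProduct.map δ₄ LinearMap.id (δ₃ x)))
    (f : Y →ₗ[k] R) (g : Z →ₗ[k] R) (h : W →ₗ[k] R) :
    (f ⋆[δ₄] g) ⋆[δ₃] h = f ⋆[δ₁] g ⋆[δ₂] h := by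
  rw [← tensorMul_comp_map_id_comp, ← tensorMul_comp_assoc_map_comp_id]
  exact congrArg ((f ⊙ g ⊙ h) ∘ₗ ·) (LinearMap.ext fun x => (hδ x).symm)

theorem comp_unitMap_tensorMul {R' : Type*} [Semiring R'] [Algebra k R'] (F : R →ₗ[k] R')
    (ε : Y →ₗ[k] k) (f : Z →ₗ[k] R) : F ∘ₗ (unitMap ε ⊙ f) = unitMap ε ⊙ (F ∘ₗ f) :=
  TensorProduct.ext' fun _ _ => by simp [← Algebra.smul_def]

theorem comp_tensorMul_unitMap {R' : Type*} [Semiring R'] [Algebra k R'] (F : R →ₗ[k] R')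
    (ε : Z →ₗ[k] k) (f : Y →ₗ[k] R) : F ∘ₗ (f ⊙ unitMap ε) = (F ∘ₗ f) ⊙ unitMap ε :=
  TensorProduct.ext' fun _ _ => by simp [← Algebra.commutes, ← Algebra.smul_def]

theorem unitMap_conv_apply (δ : X →ₗ[k] Y ⊗[k] Z) (ε : Y →ₗ[k] k) (g : Z →ₗ[k] R) (x : X) :
    (unitMap ε ⋆[δ] g) x = g (TensorProduct.lid k Z (TensorProduct.map ε LinearMap.id (δ x))) := by
  have : unitMap ε ⊙ g
      = g ∘ₗ (TensorProduct.lid k Z).toLinearMap ∘ₗ TensorProduct.map ε LinearMap.id :=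
    TensorProduct.ext' fun y z => by simp [Algebra.smul_def]
  exact LinearMap.congr_fun this (δ x)

theorem conv_unitMap_apply (δ : X →ₗ[k] Y ⊗[k] Z) (ε : Z →ₗ[k] k) (f : Y →ₗ[k] R) (x : X) :
    (f ⋆[δ] unitMap ε) x = f (TensorProduct.rid k Y (TensorProduct.map LinearMap.id ε (δ x))) := by
  have : f ⊙ unitMap ε
      = f ∘ₗ (TensorProduct.rid k Y).toLinearMap ∘ₗ TensorProduct.map LinearMap.id ε :=
    TensorProduct.ext' fun y z => by simp [Algebra.smul_def, Algebra.commutes]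
  exact LinearMap.congr_fun this (δ x)

end Linear

section ImagesCommute

variable {k : Type*} [CommSemiring k] {X Y Z W R R' : Type*} [AddCommMonoid X] [Module k X]
  [AddCommMonoid Y] [Module k Y] [AddCommMonoid Z] [Module k Z] [AddCommMonoid W] [Module k W]
  [Semiring R] [Algebra k R] [Semiring R'] [Algebra k R'] {f : Y →ₗ[k] R} {g : Z →ₗ[k] R}
  {h : W →ₗ[k] R}

theorem ImagesCommute.symm (hfg : ImagesCommute f g) : ImagesCommute g f :=
  ⟨fun z y => (hfg.commute y z).symm⟩

instance (priority := 100) [hfg : ImagesCommute f g] : ImagesCommute g f := hfg.symm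

instance [ImagesCommute f g] (u : X →ₗ[k] Y) : ImagesCommute (f ∘ₗ u) g :=
  ⟨fun x z => ImagesCommute.commute (u x) z⟩

instance [ImagesCommute f g] (u : X →ₗ[k] Z) : ImagesCommute f (g ∘ₗ u) :=
  ⟨fun y x => ImagesCommute.commute y (u x)⟩

instance [ImagesCommute f g] [ImagesCommute f h] : ImagesCommute f (g ⊙ h) where
  commute y t := by
    induction t with
    | zero => simp
    | add s t hs ht => simpa only [map_add] using hs.add_right ht
    | tmul z w => exact (ImagesCommute.commute y z).mul_right (ImagesCommute.commute y w)

instance [ImagesCommute f h] [ImagesCommute g h] : ImagesCommute (f ⊙ g) h :=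
  ImagesCommute.symm inferInstance

instance [ImagesCommute f g] [ImagesCommute f h] (δ : X →ₗ[k] Z ⊗[k] W) :
    ImagesCommute f (g ⋆[δ] h) :=
  inferInstanceAs (ImagesCommute f ((g ⊙ h) ∘ₗ δ))

instance [ImagesCommute f h] [ImagesCommute g h] (δ : X →ₗ[k] Y ⊗[k] Z) :
    ImagesCommute (f ⋆[δ] g) h :=
  inferInstanceAs (ImagesCommute ((f ⊙ g) ∘ₗ δ) h)

instance (ε : Z →ₗ[k] k) : ImagesCommute f (unitMap ε) :=
  ⟨fun y z => Algebra.commute_algebraMap_right (ε z) (f y)⟩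

instance [ImagesCommute f g] (F : R →ₗ[k] R') [IsAlgHom F] :
    ImagesCommute (F ∘ₗ f) (F ∘ₗ g) where
  commute y z := by
    simp only [Commute, SemiconjBy, LinearMap.comp_apply, ← IsAlgHom.map_mul,
      (ImagesCommute.commute y z : Commute (f y) (g z)).eq]

end ImagesCommute

section IsAlgHom

variable {k : Type*} [CommSemiring k] {X Y Z R R' : Type*} [Semiring X] [Algebra k X]
  [Semiring Y] [Algebra k Y] [Semiring Z] [Algebra k Z] [Semiring R] [Algebra k R]
  [Semiring R'] [Algebra k R']

theorem IsAlgHom.map_algebraMap (f : Y →ₗ[k] R) [IsAlgHom f] (c : k) :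
    f (algebraMap k Y c) = algebraMap k R c := by
  simp [Algebra.algebraMap_eq_smul_one, IsAlgHom.map_one]

instance [IsMulCommutative Y] (f : Y →ₗ[k] R) [IsAlgHom f] : ImagesCommute f f :=
  ⟨fun x y => by rw [Commute, SemiconjBy, ← IsAlgHom.map_mul, mul_comm', IsAlgHom.map_mul]⟩

instance (f : Y →ₗ[k] R) (u : X →ₗ[k] Y) [IsAlgHom f] [IsAlgHom u] : IsAlgHom (f ∘ₗ u) :=
  ⟨fun a b => by simp [IsAlgHom.map_mul], by simp [IsAlgHom.map_one]⟩

instance (f : Y →ₗ[k] R) (g : Z →ₗ[k] R) [IsAlgHom f] [IsAlgHom g] [ImagesCommute f g] :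
    IsAlgHom (f ⊙ g) where
  map_one := by simp [Algebra.TensorProduct.one_def, IsAlgHom.map_one]
  map_mul s t := by
    induction s with
    | zero => simp
    | add s₁ s₂ h₁ h₂ => simp only [map_add, add_mul, h₁, h₂]
    | tmul y z =>
      induction t with
      | zero => simp
      | add t₁ t₂ h₁ h₂ => simp only [map_add, mul_add, h₁, h₂]
      | tmul y' z' =>
        simp only [Algebra.TensorProduct.tmul_mul_tmul, tensorMul_tmul, IsAlgHom.map_mul]
        exact (ImagesCommute.commute y' z).mul_mul_mul_comm _ _

instance (δ : X →ₗ[k] Y ⊗[k] Z) (f : Y →ₗ[k] R) (g : Z →ₗ[k] R) [IsAlgHom δ] [IsAlgHom f]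
    [IsAlgHom g] [ImagesCommute f g] : IsAlgHom (f ⋆[δ] g) :=
  inferInstanceAs (IsAlgHom ((f ⊙ g) ∘ₗ δ))

theorem tensorMul_map_mul_of_antimul {f : Y →ₗ[k] R} {g : Z →ₗ[k] R} [ImagesCommute f g]
    (hf : ∀ x y, f (x * y) = f y * f x) (hg : ∀ x y, g (x * y) = g y * g x) (s t : Y ⊗[k] Z) :
    (f ⊙ g) (s * t) = (f ⊙ g) t * (f ⊙ g) s := by
  induction s with
  | zero => simp
  | add s₁ s₂ h₁ h₂ => simp only [map_add, add_mul, mul_add, h₁, h₂]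
  | tmul y z =>
    induction t with
    | zero => simp
    | add t₁ t₂ h₁ h₂ => simp only [map_add, mul_add, add_mul, h₁, h₂]
    | tmul y' z' =>
      simp only [Algebra.TensorProduct.tmul_mul_tmul, tensorMul_tmul, hf, hg]
      exact (ImagesCommute.commute y z').mul_mul_mul_comm _ _

theorem comp_tensorMul {Y Z : Type*} [AddCommMonoid Y] [Module k Y] [AddCommMonoid Z] [Module k Z]
    (F : R →ₗ[k] R') [IsAlgHom F] (f : Y →ₗ[k] R) (g : Z →ₗ[k] R) :
    F ∘ₗ (f ⊙ g) = (F ∘ₗ f) ⊙ (F ∘ₗ g) :=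
  TensorProduct.ext' fun _ _ => IsAlgHom.map_mul _ _

theorem comp_conv {X Y Z : Type*} [AddCommMonoid X] [Module k X] [AddCommMonoid Y] [Module k Y]
    [AddCommMonoid Z] [Module k Z] (F : R →ₗ[k] R') [IsAlgHom F] (δ : X →ₗ[k] Y ⊗[k] Z)
    (f : Y →ₗ[k] R) (g : Z →ₗ[k] R) : F ∘ₗ (f ⋆[δ] g) = (F ∘ₗ f) ⋆[δ] (F ∘ₗ g) :=
  congrArg (· ∘ₗ δ) (comp_tensorMul F f g)

end IsAlgHom

section TensorFactors

variable {k : Type*} [Field k] {X Y Z R : Type*} [Ring X] [Algebra k X] [Ring Y] [Algebra k Y]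
  [Ring Z] [Algebra k Z] [Semiring R] [Algebra k R]

instance : IsAlgHom (ι₁ k Y Z) := ⟨fun _ _ => by simp [ι₁], rfl⟩

instance : IsAlgHom (ι₂ k Y Z) := ⟨fun _ _ => by simp [ι₂], rfl⟩

instance : ImagesCommute (ι₁ k Y Z) (ι₂ k Y Z) :=
  ⟨fun _ _ => by simp [Commute, SemiconjBy, ι₁, ι₂]⟩

@[simp]
theorem tensorMul_comp_ι₁ (f : Y →ₗ[k] R) (g : Z →ₗ[k] R) [IsAlgHom g] :
    (f ⊙ g) ∘ₗ ι₁ k Y Z = f :=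
  LinearMap.ext fun y => by simp [ι₁, IsAlgHom.map_one]

@[simp]
theorem tensorMul_comp_ι₂ (f : Y →ₗ[k] R) (g : Z →ₗ[k] R) [IsAlgHom f] :
    (f ⊙ g) ∘ₗ ι₂ k Y Z = g :=
  LinearMap.ext fun z => by simp [ι₂, IsAlgHom.map_one]

theorem conv_ι₁ (f : Y →ₗ[k] R) (g : Z →ₗ[k] R) [IsAlgHom g] : f ⋆[ι₁ k Y Z] g = f :=
  tensorMul_comp_ι₁ f g

theorem tensorMul_ι : ι₁ k Y Z ⊙ ι₂ k Y Z = LinearMap.id :=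
  TensorProduct.ext' fun _ _ => by simp [ι₁, ι₂]

theorem ι₁_conv_ι₂ {V : Type*} [AddCommMonoid V] [Module k V] (δ : V →ₗ[k] Y ⊗[k] Z) :
    ι₁ k Y Z ⋆[δ] ι₂ k Y Z = δ := by
  rw [conv, tensorMul_ι, LinearMap.id_comp]

theorem tensorMul_comp_conv_ι {V P Q : Type*} [AddCommMonoid V] [Module k V] [AddCommMonoid P]
    [Module k P] [AddCommMonoid Q] [Module k Q] (f : Y →ₗ[k] R) (g : Z →ₗ[k] R) (p : P →ₗ[k] Y)
    (q : Q →ₗ[k] Z) (δ : V →ₗ[k] P ⊗[k] Q) :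
    (f ⊙ g) ∘ₗ ((ι₁ k Y Z ∘ₗ p) ⋆[δ] (ι₂ k Y Z ∘ₗ q)) = (f ∘ₗ p) ⋆[δ] (g ∘ₗ q) := by
  rw [conv, conv, ← tensorMul_comp_map, ← tensorMul_comp_map, tensorMul_ι, LinearMap.id_comp,
    LinearMap.comp_assoc]

theorem comp_ι₁_tensorMul_comp_ι₂ (f : Y ⊗[k] Z →ₗ[k] R) [IsAlgHom f] :
    (f ∘ₗ ι₁ k Y Z) ⊙ (f ∘ₗ ι₂ k Y Z) = f := by
  rw [← comp_tensorMul, tensorMul_ι, LinearMap.comp_id]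

theorem tensorMul_inj {f f' : Y →ₗ[k] R} {g g' : Z →ₗ[k] R} [IsAlgHom f] [IsAlgHom f']
    [IsAlgHom g] [IsAlgHom g'] : f ⊙ g = f' ⊙ g' ↔ f = f' ∧ g = g' := by
  refine ⟨fun h => ⟨?_, ?_⟩, fun ⟨hf, hg⟩ => by rw [hf, hg]⟩
  · simpa only [tensorMul_comp_ι₁] using congrArg (· ∘ₗ ι₁ k Y Z) h
  · simpa only [tensorMul_comp_ι₂] using congrArg (· ∘ₗ ι₂ k Y Z) h

variable (k X Y Z)

/-- The inclusion of the first factor of `X ⊗ (Y ⊗ Z)`. The three inclusions `leg₁`, `leg₂`,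
`leg₃` are the generic commuting triple of algebra maps out of `X`, `Y` and `Z`. -/
abbrev leg₁ : X →ₗ[k] X ⊗[k] (Y ⊗[k] Z) := ι₁ k X (Y ⊗[k] Z)

/-- The inclusion of the second factor of `X ⊗ (Y ⊗ Z)`. -/
abbrev leg₂ : Y →ₗ[k] X ⊗[k] (Y ⊗[k] Z) := ι₂ k X (Y ⊗[k] Z) ∘ₗ ι₁ k Y Z

/-- The inclusion of the third factor of `X ⊗ (Y ⊗ Z)`. -/
abbrev leg₃ : Z →ₗ[k] X ⊗[k] (Y ⊗[k] Z) := ι₂ k X (Y ⊗[k] Z) ∘ₗ ι₂ k Y Z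

theorem tensorMul_legs : leg₁ k X Y Z ⊙ leg₂ k X Y Z ⊙ leg₃ k X Y Z = LinearMap.id := by
  rw [← comp_tensorMul, tensorMul_ι, LinearMap.comp_id, tensorMul_ι]

end TensorFactors

section Evaluation

variable {k : Type*} [Field k] {A H R : Type*} [Ring A] [Algebra k A] [Ring H] [Algebra k H]
  [Semiring R] [Algebra k R]

section PlacedLegs

variable {X Y Z W : Type*} [AddCommMonoid X] [Module k X] [AddCommMonoid Y] [Module k Y]
  [Ring Z] [Algebra k Z] [Ring W] [Algebra k W]

theorem tensorMul_comp_map_id_ι₁_comp (δ : X →ₗ[k] Y ⊗[k] Z) (f : Y →ₗ[k] R) (g : Z →ₗ[k] R)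
    (h : W →ₗ[k] R) [IsAlgHom h] :
    (f ⊙ g ⊙ h) ∘ₗ TensorProduct.map LinearMap.id (ι₁ k Z W) ∘ₗ δ = f ⋆[δ] g := by
  rw [tensorMul_comp_map_id_comp]
  exact congrArg (f ⋆[δ] ·) (tensorMul_comp_ι₁ g h)

theorem tensorMul_comp_map_id_ι₂_comp (δ : X →ₗ[k] Y ⊗[k] W) (f : Y →ₗ[k] R) (g : Z →ₗ[k] R)
    (h : W →ₗ[k] R) [IsAlgHom g] :
    (f ⊙ g ⊙ h) ∘ₗ TensorProduct.map LinearMap.id (ι₂ k Z W) ∘ₗ δ = f ⋆[δ] h := by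
  rw [tensorMul_comp_map_id_comp]
  exact congrArg (f ⋆[δ] ·) (tensorMul_comp_ι₂ g h)

end PlacedLegs

theorem tensorMul_comp_braceRHS (ΔH Δ'H : H →ₗ[k] H ⊗[k] H) (S : H →ₗ[k] H) (f g h : H →ₗ[k] R)
    [IsAlgHom f] [IsAlgHom g] [IsAlgHom h] [ImagesCommute f g] [ImagesCommute f h]
    [ImagesCommute g h] :
    (f ⊙ g ⊙ h) ∘ₗ braceRHS k H ΔH Δ'H S
      = (f ⋆[Δ'H] g) ⋆[ΔH] (f ∘ₗ S) ⋆[ΔH] (f ⋆[Δ'H] h) := by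
  have braceRHS_eq_conv : braceRHS k H ΔH Δ'H S
      = (TensorProduct.map LinearMap.id (ι₁ k H H) ∘ₗ Δ'H) ⋆[ΔH]
        (ι₁ k H (H ⊗[k] H) ∘ₗ S) ⋆[ΔH] (TensorProduct.map LinearMap.id (ι₂ k H H) ∘ₗ Δ'H) := by
    rw [← tensorMul_comp_map_id_comp]
    change _ ∘ₗ _ ∘ₗ _ = _
    rw [← LinearMap.comp_assoc]
    refine congrArg (· ∘ₗ _) (TensorProduct.ext_threefold' fun _ _ _ => rfl)
  rw [braceRHS_eq_conv, comp_conv, comp_conv, tensorMul_comp_map_id_ι₁_comp,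
    tensorMul_comp_map_id_ι₂_comp, ← LinearMap.comp_assoc, tensorMul_comp_ι₁]

theorem tensorMul_comp_comodCoalgRHS (ΔA : A →ₗ[k] A ⊗[k] A) (ρ : A →ₗ[k] H ⊗[k] A)
    (f : H →ₗ[k] R) (g h : A →ₗ[k] R) [IsAlgHom f] [IsAlgHom g] [IsAlgHom h] [ImagesCommute f g]
    [ImagesCommute f h] [ImagesCommute g h] :
    (f ⊙ g ⊙ h) ∘ₗ comodCoalgRHS k A H ΔA ρ = (f ⋆[ρ] g) ⋆[ΔA] (f ⋆[ρ] h) := by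
  refine (comp_conv (f ⊙ g ⊙ h) _ _ _).trans ?_
  rw [tensorMul_comp_map_id_ι₁_comp, tensorMul_comp_map_id_ι₂_comp]

theorem tensorMul_comp_HM2RHS (ΔA : A →ₗ[k] A ⊗[k] A) (ρ : A →ₗ[k] H ⊗[k] A)
    (φ : H →ₗ[k] H ⊗[k] A) (f : H →ₗ[k] R) (g h : A →ₗ[k] R) [IsAlgHom f] [IsAlgHom g]
    [IsAlgHom h] [ImagesCommute f g] [ImagesCommute f h] [ImagesCommute g h] :
    (f ⊙ g ⊙ h) ∘ₗ HM2RHS k A H ΔA ρ φ = (f ⋆[ρ] g) ⋆[ΔA] (f ⋆[φ] g) ⋆[ρ] h := by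
  refine (comp_conv (f ⊙ g ⊙ h) _ _ _).trans ?_
  rw [tensorMul_comp_map_id_ι₁_comp, tensorMul_comp_assoc_map_comp_id]

theorem tensorMul_comp_HM3RHS (ΔH : H →ₗ[k] H ⊗[k] H) (ρ : A →ₗ[k] H ⊗[k] A)
    (φ : H →ₗ[k] H ⊗[k] A) (f g : H →ₗ[k] R) (h : A →ₗ[k] R) [IsAlgHom f] [IsAlgHom g]
    [IsAlgHom h] [ImagesCommute f g] [ImagesCommute f h] [ImagesCommute g h] :
    (f ⊙ g ⊙ h) ∘ₗ HM3RHS k A H ΔH ρ φ = (f ⋆[φ] g ⋆[ρ] h) ⋆[ΔH] (g ⋆[φ] h) := by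
  refine (comp_conv (f ⊙ g ⊙ h) _ _ _).trans ?_
  rw [tensorMul_comp_map_id_comp, ← LinearMap.comp_assoc, tensorMul_comp_ι₂]
  rfl

theorem tensorMul_comp_LHmap (ΔH Δ'H : H →ₗ[k] H ⊗[k] H) (S : H →ₗ[k] H) (f g : H →ₗ[k] R)
    (h : A →ₗ[k] R) [IsAlgHom f] [IsAlgHom g] [IsAlgHom h] [ImagesCommute f g]
    [ImagesCommute f h] [ImagesCommute g h] :
    (f ⊙ g ⊙ h) ∘ₗ LHmap k A H ΔH Δ'H S = (f ⋆[Δ'H] g) ⋆[ΔH] (f ∘ₗ S) := by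
  refine (comp_conv (f ⊙ g ⊙ h) _ _ _).trans ?_
  rw [tensorMul_comp_map_id_ι₁_comp, ← LinearMap.comp_assoc, tensorMul_comp_ι₁]

theorem tensorMul_comp_eq42RHS (ΔH Δ'H : H →ₗ[k] H ⊗[k] H) (S : H →ₗ[k] H)
    (ρ ρ' : A →ₗ[k] H ⊗[k] A) (f g : H →ₗ[k] R) (h : A →ₗ[k] R) [IsAlgHom f] [IsAlgHom g]
    [IsAlgHom h] [ImagesCommute f g] [ImagesCommute f h] [ImagesCommute g h] :
    (f ⊙ g ⊙ h) ∘ₗ eq42RHS k A H ΔH Δ'H S ρ ρ'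
      = ((f ⋆[Δ'H] g) ⋆[ΔH] (f ∘ₗ S)) ⋆[ρ] (f ⋆[ρ'] h) := by
  refine (comp_conv (f ⊙ g ⊙ h) _ _ _).trans ?_
  rw [tensorMul_comp_LHmap, tensorMul_comp_map_id_ι₂_comp]

theorem tensorMul_comp_eq43RHS (ΔH Δ'H : H →ₗ[k] H ⊗[k] H) (S : H →ₗ[k] H)
    (ρ' : A →ₗ[k] H ⊗[k] A) (φ : H →ₗ[k] H ⊗[k] A) (f g : H →ₗ[k] R) (h : A →ₗ[k] R) [IsAlgHom f]
    [IsAlgHom g] [IsAlgHom h] [ImagesCommute f g] [ImagesCommute f h] [ImagesCommute g h] :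
    (f ⊙ g ⊙ h) ∘ₗ eq43RHS k A H ΔH Δ'H S ρ' φ
      = (((f ⋆[Δ'H] g) ⋆[ΔH] (f ∘ₗ S)) ⋆[φ] (f ⋆[ρ'] h)) ⋆[ΔH] f := by
  refine (comp_conv (f ⊙ g ⊙ h) _ _ _).trans ?_
  rw [tensorMul_comp_ι₁]
  refine congrArg (· ⋆[ΔH] f) ((comp_conv (f ⊙ g ⊙ h) _ _ _).trans ?_)
  rw [tensorMul_comp_LHmap, tensorMul_comp_map_id_ι₂_comp]

theorem conv_bicrossΔ (ΔA : A →ₗ[k] A ⊗[k] A) (ΔH : H →ₗ[k] H ⊗[k] H) (ρ : A →ₗ[k] H ⊗[k] A)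
    (φ : H →ₗ[k] H ⊗[k] A) (fA gA : A →ₗ[k] R) (fH gH : H →ₗ[k] R) [IsAlgHom fH] [IsAlgHom gA]
    [ImagesCommute fH gA] :
    (fA ⊙ fH) ⋆[bicrossΔ k A H ΔA ΔH ρ φ] (gA ⊙ gH)
      = (fA ⋆[ΔA] fH ⋆[ρ] gA) ⊙ ((fH ⋆[φ] gA) ⋆[ΔH] gH) := by
  have tensorMul_comp : ((fA ⊙ fH) ⊙ gA ⊙ gH) ∘ₗ
      ((TensorProduct.map LinearMap.id (ι₁ k A H) ∘ₗ
          (TensorProduct.assoc k A H A).symm.toLinearMap) ⊙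
        (TensorProduct.map (ι₂ k A H) LinearMap.id ∘ₗ (TensorProduct.assoc k H A H).toLinearMap))
      = (fA ⊙ fH ⊙ gA) ⊙ (fH ⊙ gA) ⊙ gH := by
    ext a x b y c z
    have fH_mul_gA : fH y * (gA b * (gA c * gH z)) = gA b * (fH y * (gA c * gH z)) :=
      (ImagesCommute.commute y b : Commute (fH y) (gA b)).left_comm _
    simp [ι₁, ι₂, IsAlgHom.map_mul, mul_assoc, fH_mul_gA]
  refine TensorProduct.ext' fun a h => (LinearMap.congr_fun tensorMul_comp
    (TensorProduct.map LinearMap.id ρ (ΔA a) ⊗ₜ TensorProduct.map φ LinearMap.id (ΔH h))).trans ?_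
  exact congrArg₂ (· * ·) (LinearMap.congr_fun (tensorMul_comp_map_id_comp ΔA ρ fA fH gA) a)
    (LinearMap.congr_fun (tensorMul_comp_map_comp_id ΔH φ fH gA gH) h)

theorem conv_smashΔ (ΔA : A →ₗ[k] A ⊗[k] A) (ΔH : H →ₗ[k] H ⊗[k] H) (ρ : A →ₗ[k] H ⊗[k] A)
    (fA gA : A →ₗ[k] R) (fH gH : H →ₗ[k] R) [IsAlgHom fH] [IsAlgHom gA] [ImagesCommute fH gA] :
    (fA ⊙ fH) ⋆[bicrossΔ k A H ΔA ΔH ρ (ι₁ k H A)] (gA ⊙ gH)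
      = (fA ⋆[ΔA] fH ⋆[ρ] gA) ⊙ (fH ⋆[ΔH] gH) := by
  rw [conv_bicrossΔ, conv_ι₁]

end Evaluation

namespace HopfStruct

variable {k : Type*} [Field k] {H R : Type*} [Ring H] [Algebra k H] [Semiring R] [Algebra k R]

/-- The Mathlib Hopf algebra attached to a `HopfStruct`. -/
abbrev toHopfAlgebra (s : HopfStruct k H) : HopfAlgebra k H where
  comul := s.Δ
  counit := s.ε
  coassoc := LinearMap.ext fun h => (s.coassoc h).symm
  rTensor_counit_comp_comul := LinearMap.ext fun h =>
    (TensorProduct.lid k H).injective ((s.counit_left h).trans (by simp))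
  lTensor_counit_comp_comul := LinearMap.ext fun h =>
    (TensorProduct.rid k H).injective ((s.counit_right h).trans (by simp))
  counit_one := s.counit_one
  mul_compr₂_counit := LinearMap.ext₂ s.counit_mul
  comul_one := s.comul_one
  mul_compr₂_comul := LinearMap.ext₂ s.comul_mul
  antipode := s.S
  mul_antipode_rTensor_comul := LinearMap.ext s.antipode_left
  mul_antipode_lTensor_comul := LinearMap.ext s.antipode_right

theorem S_mul (s : HopfStruct k H) (x y : H) : s.S (x * y) = s.S y * s.S x :=
  letI := s.toHopfAlgebra
  HopfAlgebra.antipode_mul_antidistrib (R := k) x y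

theorem S_one (s : HopfStruct k H) : s.S 1 = 1 :=
  letI := s.toHopfAlgebra
  HopfAlgebra.antipode_one (R := k)

instance (s : HopfStruct k H) : IsAlgHom s.Δ := ⟨s.comul_mul, s.comul_one⟩

instance (s : HopfStruct k H) [IsMulCommutative H] : IsAlgHom s.S :=
  ⟨fun x y => by rw [s.S_mul, mul_comm'], s.S_one⟩

instance (s : HopfStruct k H) : IsAlgHom (unitMap s.ε : H →ₗ[k] R) :=
  ⟨fun x y => by simp [s.counit_mul], by simp [s.counit_one]⟩

theorem conv_assoc (s : HopfStruct k H) (f g h : H →ₗ[k] R) :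
    (f ⋆[s.Δ] g) ⋆[s.Δ] h = f ⋆[s.Δ] g ⋆[s.Δ] h :=
  HopfPaper.conv_assoc s.coassoc f g h

theorem unitMap_conv (s : HopfStruct k H) (f : H →ₗ[k] R) : unitMap s.ε ⋆[s.Δ] f = f :=
  LinearMap.ext fun x => by rw [unitMap_conv_apply, s.counit_left]

theorem conv_unitMap (s : HopfStruct k H) (f : H →ₗ[k] R) : f ⋆[s.Δ] unitMap s.ε = f :=
  LinearMap.ext fun x => by rw [conv_unitMap_apply, s.counit_right]

theorem comp_S_conv (s : HopfStruct k H) (f : H →ₗ[k] R) [IsAlgHom f] :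
    (f ∘ₗ s.S) ⋆[s.Δ] f = unitMap s.ε := by
  refine (comp_conv f s.Δ s.S LinearMap.id).symm.trans (LinearMap.ext fun x => ?_)
  exact (congrArg f (s.antipode_left x)).trans (IsAlgHom.map_algebraMap f _)

theorem conv_comp_S (s : HopfStruct k H) (f : H →ₗ[k] R) [IsAlgHom f] :
    f ⋆[s.Δ] (f ∘ₗ s.S) = unitMap s.ε := by
  refine (comp_conv f s.Δ LinearMap.id s.S).symm.trans (LinearMap.ext fun x => ?_)
  exact (congrArg f (s.antipode_right x)).trans (IsAlgHom.map_algebraMap f _)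

theorem conv_left_inj (s : HopfStruct k H) (p : H →ₗ[k] R) [IsAlgHom p] {f g : H →ₗ[k] R} :
    p ⋆[s.Δ] f = p ⋆[s.Δ] g ↔ f = g := by
  refine ⟨fun h => ?_, congrArg _⟩
  rw [← s.unitMap_conv f, ← s.unitMap_conv g, ← s.comp_S_conv p, s.conv_assoc, h, s.conv_assoc]

theorem conv_right_inj (s : HopfStruct k H) (p : H →ₗ[k] R) [IsAlgHom p] {f g : H →ₗ[k] R} :
    f ⋆[s.Δ] p = g ⋆[s.Δ] p ↔ f = g := by
  refine ⟨fun h => ?_, congrArg (· ⋆[s.Δ] p)⟩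
  rw [← s.conv_unitMap f, ← s.conv_unitMap g, ← s.conv_comp_S p, ← s.conv_assoc, h, s.conv_assoc]

theorem eq_conv_iff_conv_comp_S_eq (s : HopfStruct k H) (p : H →ₗ[k] R) [IsAlgHom p]
    {f g : H →ₗ[k] R} : f = g ⋆[s.Δ] p ↔ f ⋆[s.Δ] (p ∘ₗ s.S) = g := by
  constructor
  · rintro rfl
    rw [s.conv_assoc, s.conv_comp_S, s.conv_unitMap]
  · rintro rfl
    rw [s.conv_assoc, s.comp_S_conv, s.conv_unitMap]

end HopfStruct

section BraceIdentity

variable {k : Type*} [Field k] {W R : Type*} [Ring W] [Algebra k W] [Semiring R] [Algebra k R]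
  {ΔW Δ'W : W →ₗ[k] W ⊗[k] W} {S : W →ₗ[k] W}

theorem conv_conv_of_braceLHS_eq_braceRHS
    (hW : braceLHS k W ΔW Δ'W = braceRHS k W ΔW Δ'W S) (f g h : W →ₗ[k] R) [IsAlgHom f]
    [IsAlgHom g] [IsAlgHom h] [ImagesCommute f g] [ImagesCommute f h] [ImagesCommute g h] :
    f ⋆[Δ'W] g ⋆[ΔW] h = (f ⋆[Δ'W] g) ⋆[ΔW] (f ∘ₗ S) ⋆[ΔW] (f ⋆[Δ'W] h) := by
  rw [← tensorMul_comp_braceRHS, ← tensorMul_comp_map_id_comp, ← hW]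
  rfl

theorem braceLHS_eq_braceRHS_iff_conv_legs :
    braceLHS k W ΔW Δ'W = braceRHS k W ΔW Δ'W S ↔
      leg₁ k W W W ⋆[Δ'W] leg₂ k W W W ⋆[ΔW] leg₃ k W W W
        = (leg₁ k W W W ⋆[Δ'W] leg₂ k W W W) ⋆[ΔW] (leg₁ k W W W ∘ₗ S) ⋆[ΔW]
          (leg₁ k W W W ⋆[Δ'W] leg₃ k W W W) := by
  rw [← tensorMul_comp_braceRHS, ← tensorMul_comp_map_id_comp, tensorMul_legs, LinearMap.id_comp,
    LinearMap.id_comp, braceLHS]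

end BraceIdentity

theorem HopfBrace.conv_conv {k : Type*} [Field k] {H R : Type*} [Ring H] [Algebra k H]
    [Semiring R] [Algebra k R] (B : HopfBrace k H) (f g h : H →ₗ[k] R) [IsAlgHom f] [IsAlgHom g]
    [IsAlgHom h] [ImagesCommute f g] [ImagesCommute f h] [ImagesCommute g h] :
    f ⋆[B.snd.Δ] g ⋆[B.fst.Δ] h
      = (f ⋆[B.snd.Δ] g) ⋆[B.fst.Δ] (f ∘ₗ B.fst.S) ⋆[B.fst.Δ] (f ⋆[B.snd.Δ] h) :=
  conv_conv_of_braceLHS_eq_braceRHS (LinearMap.ext B.compat) f g h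

theorem IsComodCoalg.conv_conv {k : Type*} [Field k] {A H R : Type*} [Ring A] [Algebra k A]
    [Ring H] [Algebra k H] [Semiring R] [Algebra k R] {ΔA : A →ₗ[k] A ⊗[k] A} {εA : A →ₗ[k] k}
    {ρ : A →ₗ[k] H ⊗[k] A} (hρ : IsComodCoalg k A H ΔA εA ρ) (f : H →ₗ[k] R) (g h : A →ₗ[k] R)
    [IsAlgHom f] [IsAlgHom g] [IsAlgHom h] [ImagesCommute f g] [ImagesCommute f h]
    [ImagesCommute g h] : f ⋆[ρ] g ⋆[ΔA] h = (f ⋆[ρ] g) ⋆[ΔA] (f ⋆[ρ] h) := by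
  rw [← tensorMul_comp_comodCoalgRHS, ← tensorMul_comp_map_id_comp]
  exact congrArg ((f ⊙ g ⊙ h) ∘ₗ ·) (LinearMap.ext hρ.1)

theorem IsAlgebraMorphism.isAlgHom {k : Type*} [Field k] {M N : Type*} [Ring M] [Algebra k M]
    [Ring N] [Algebra k N] {f : M →ₗ[k] N} (hf : IsAlgebraMorphism k M N f) : IsAlgHom f :=
  ⟨hf.1, hf.2⟩

section Coactions

variable {k : Type*} [Field k] {A H R : Type*} [Ring A] [Algebra k A] [Ring H] [Algebra k H]
  [Semiring R] [Algebra k R]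

theorem LeftCoaction.conv_assoc {ΔH : H →ₗ[k] H ⊗[k] H} {εH : H →ₗ[k] k} {ρ : A →ₗ[k] H ⊗[k] A}
    (hρ : LeftCoaction k A H ΔH εH ρ) (f g : H →ₗ[k] R) (h : A →ₗ[k] R) :
    (f ⋆[ΔH] g) ⋆[ρ] h = f ⋆[ρ] g ⋆[ρ] h :=
  HopfPaper.conv_assoc hρ.1 f g h

theorem LeftCoaction.unitMap_conv {ΔH : H →ₗ[k] H ⊗[k] H} {εH : H →ₗ[k] k} {ρ : A →ₗ[k] H ⊗[k] A}
    (hρ : LeftCoaction k A H ΔH εH ρ) (f : A →ₗ[k] R) : unitMap εH ⋆[ρ] f = f :=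
  LinearMap.ext fun a => by rw [unitMap_conv_apply, hρ.2]

theorem RightCoaction.conv_assoc {ΔA : A →ₗ[k] A ⊗[k] A} {εA : A →ₗ[k] k} {φ : H →ₗ[k] H ⊗[k] A}
    (hφ : RightCoaction k A H ΔA εA φ) (f : H →ₗ[k] R) (g h : A →ₗ[k] R) :
    (f ⋆[φ] g) ⋆[φ] h = f ⋆[φ] g ⋆[ΔA] h :=
  HopfPaper.conv_assoc hφ.1 f g h

theorem RightCoaction.conv_unitMap {ΔA : A →ₗ[k] A ⊗[k] A} {εA : A →ₗ[k] k}
    {φ : H →ₗ[k] H ⊗[k] A} (hφ : RightCoaction k A H ΔA εA φ) (f : H →ₗ[k] R) :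
    f ⋆[φ] unitMap εA = f :=
  LinearMap.ext fun h => by rw [conv_unitMap_apply, hφ.2]

end Coactions

namespace IsHopfMatchedPair

variable {k : Type*} [Field k] {A H R : Type*} [Ring A] [Algebra k A] [Ring H] [Algebra k H]
  [Semiring R] [Algebra k R] {ρ : A →ₗ[k] H ⊗[k] A} {φ : H →ₗ[k] H ⊗[k] A}

section Action

variable {ΔA : A →ₗ[k] A ⊗[k] A} {εA : A →ₗ[k] k} {ΔH : H →ₗ[k] H ⊗[k] H} {εH : H →ₗ[k] k}
  (hmp : IsHopfMatchedPair k A H ΔA εA ΔH εH ρ φ)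

include hmp

theorem leftCoaction : LeftCoaction k A H ΔH εH ρ := hmp.1

theorem isAlgHom_ρ : IsAlgHom ρ := hmp.2.1.isAlgHom

theorem rightCoaction : RightCoaction k A H ΔA εA φ := hmp.2.2.1

theorem isAlgHom_φ : IsAlgHom φ := hmp.2.2.2.1.isAlgHom

theorem conv_ρ_unitMap (f : H →ₗ[k] R) [IsAlgHom f] : f ⋆[ρ] unitMap εA = unitMap εA :=
  LinearMap.ext fun a => by
    rw [conv_unitMap_apply, hmp.2.2.2.2.1, IsAlgHom.map_algebraMap, unitMap_apply]

theorem unitMap_conv_φ (g : A →ₗ[k] R) [IsAlgHom g] : unitMap εH ⋆[φ] g = unitMap εH :=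
  LinearMap.ext fun h => by
    rw [unitMap_conv_apply, hmp.2.2.2.2.2.1, IsAlgHom.map_algebraMap, unitMap_apply]

theorem conv_ρ_conv (f : H →ₗ[k] R) (g h : A →ₗ[k] R) [IsAlgHom f] [IsAlgHom g] [IsAlgHom h]
    [ImagesCommute f g] [ImagesCommute f h] [ImagesCommute g h] :
    f ⋆[ρ] g ⋆[ΔA] h = (f ⋆[ρ] g) ⋆[ΔA] (f ⋆[φ] g) ⋆[ρ] h := by
  rw [← tensorMul_comp_HM2RHS, ← tensorMul_comp_map_id_comp]
  exact congrArg ((f ⊙ g ⊙ h) ∘ₗ ·) (LinearMap.ext hmp.2.2.2.2.2.2.1)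

theorem conv_φ_conv (f g : H →ₗ[k] R) (h : A →ₗ[k] R) [IsAlgHom f] [IsAlgHom g] [IsAlgHom h]
    [ImagesCommute f g] [ImagesCommute f h] [ImagesCommute g h] :
    (f ⋆[ΔH] g) ⋆[φ] h = (f ⋆[φ] g ⋆[ρ] h) ⋆[ΔH] (g ⋆[φ] h) := by
  rw [← tensorMul_comp_HM3RHS, ← tensorMul_comp_assoc_map_comp_id]
  exact congrArg ((f ⊙ g ⊙ h) ∘ₗ ·) (LinearMap.ext hmp.2.2.2.2.2.2.2.1)

end Action

variable {sA : HopfStruct k A} {sH : HopfStruct k H}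
  (hmp : IsHopfMatchedPair k A H sA.Δ sA.ε sH.Δ sH.ε ρ φ)

local notation "Δ̃" => bicrossΔ k A H sA.Δ sH.Δ ρ φ

local notation "S̃" => bicrossS k A H sA.S sH.S ρ φ

theorem unitMap_tensorMul_conv_tensorMul_unitMap (η : H →ₗ[k] R) (α : A →ₗ[k] R) :
    (unitMap sA.ε ⊙ η) ⋆[Δ̃] (α ⊙ unitMap sH.ε) = (η ⊙ α) ∘ₗ (ρ ⊙ φ) := by
  have generic : (unitMap sA.ε ⊙ ι₁ k H A) ⋆[Δ̃] (ι₂ k H A ⊙ unitMap sH.ε) = ρ ⊙ φ := by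
    rw [conv_bicrossΔ, ι₁_conv_ι₂, ι₁_conv_ι₂, sA.unitMap_conv, sH.conv_unitMap]
  have := tensorMul_comp_conv_ι η α (unitMap sA.ε ⊙ LinearMap.id) (LinearMap.id ⊙ unitMap sH.ε) Δ̃
  simp only [comp_unitMap_tensorMul, comp_tensorMul_unitMap, LinearMap.comp_id] at this
  rw [← this, generic]

theorem tensorMul_comp_bicrossS (α : A →ₗ[k] R) (η : H →ₗ[k] R) [IsAlgHom α] [IsAlgHom η]
    [ImagesCommute α η] :
    (α ⊙ η) ∘ₗ S̃ = (unitMap sA.ε ⊙ (η ∘ₗ sH.S)) ⋆[Δ̃] ((α ∘ₗ sA.S) ⊙ unitMap sH.ε) := by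
  have comp_swap : (α ⊙ η) ∘ₗ TensorProduct.map sA.S sH.S ∘ₗ (TensorProduct.comm k H A).toLinearMap
      = (η ∘ₗ sH.S) ⊙ (α ∘ₗ sA.S) :=
    TensorProduct.ext' fun h a => ImagesCommute.commute (sA.S a) (sH.S h)
  have antimul := tensorMul_map_mul_of_antimul (f := η ∘ₗ sH.S) (g := α ∘ₗ sA.S)
    (fun x y => by simp [sH.S_mul, IsAlgHom.map_mul])
    (fun x y => by simp [sA.S_mul, IsAlgHom.map_mul])
  rw [unitMap_tensorMul_conv_tensorMul_unitMap]
  refine TensorProduct.ext' fun a h => ?_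
  rw [LinearMap.comp_apply, LinearMap.comp_apply, tensorMul_tmul, antimul, ← comp_swap]
  exact IsAlgHom.map_mul _ _

include hmp

theorem conv_bicrossΔ_assoc_of_isAlgHom (α₁ α₂ α₃ : A →ₗ[k] R) (η₁ η₂ η₃ : H →ₗ[k] R)
    [IsAlgHom η₁] [IsAlgHom α₂] [IsAlgHom η₂] [IsAlgHom α₃] [ImagesCommute η₁ α₂]
    [ImagesCommute η₁ η₂] [ImagesCommute η₁ α₃] [ImagesCommute α₂ η₂] [ImagesCommute α₂ α₃]
    [ImagesCommute η₂ α₃] :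
    ((α₁ ⊙ η₁) ⋆[Δ̃] (α₂ ⊙ η₂)) ⋆[Δ̃] (α₃ ⊙ η₃) = (α₁ ⊙ η₁) ⋆[Δ̃] (α₂ ⊙ η₂) ⋆[Δ̃] (α₃ ⊙ η₃) := by
  have := hmp.isAlgHom_ρ
  have := hmp.isAlgHom_φ
  rw [conv_bicrossΔ, conv_bicrossΔ, conv_bicrossΔ, conv_bicrossΔ, hmp.conv_ρ_conv, hmp.conv_φ_conv,
    hmp.leftCoaction.conv_assoc, hmp.rightCoaction.conv_assoc, sA.conv_assoc, sH.conv_assoc]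

theorem bicrossΔ_coassoc (w : A ⊗[k] H) :
    TensorProduct.map LinearMap.id Δ̃ (Δ̃ w)
      = TensorProduct.assoc k _ _ _ (TensorProduct.map Δ̃ LinearMap.id (Δ̃ w)) := by
  let W := A ⊗[k] H
  have conv_legs : (leg₁ k W W W ⋆[Δ̃] leg₂ k W W W) ⋆[Δ̃] leg₃ k W W W
      = leg₁ k W W W ⋆[Δ̃] leg₂ k W W W ⋆[Δ̃] leg₃ k W W W := by
    rw [← comp_ι₁_tensorMul_comp_ι₂ (leg₁ k W W W), ← comp_ι₁_tensorMul_comp_ι₂ (leg₂ k W W W),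
      ← comp_ι₁_tensorMul_comp_ι₂ (leg₃ k W W W)]
    exact hmp.conv_bicrossΔ_assoc_of_isAlgHom ..
  rw [← tensorMul_comp_map_id_comp, ← tensorMul_comp_assoc_map_comp_id, tensorMul_legs,
    LinearMap.id_comp, LinearMap.id_comp] at conv_legs
  exact (LinearMap.congr_fun conv_legs w).symm

theorem conv_bicrossΔ_assoc (f₁ f₂ f₃ : A ⊗[k] H →ₗ[k] R) :
    (f₁ ⋆[Δ̃] f₂) ⋆[Δ̃] f₃ = f₁ ⋆[Δ̃] f₂ ⋆[Δ̃] f₃ :=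
  conv_assoc hmp.bicrossΔ_coassoc f₁ f₂ f₃

theorem unitMap_conv_bicrossΔ (α : A →ₗ[k] R) (η : H →ₗ[k] R) [IsAlgHom α] :
    (unitMap sA.ε ⊙ unitMap sH.ε) ⋆[Δ̃] (α ⊙ η) = α ⊙ η := by
  rw [conv_bicrossΔ, hmp.leftCoaction.unitMap_conv, hmp.unitMap_conv_φ, sA.unitMap_conv,
    sH.unitMap_conv]

theorem comp_bicrossS_conv (α β : A →ₗ[k] R) (η γ : H →ₗ[k] R) [IsAlgHom α] [IsAlgHom η]
    [IsAlgHom β] [ImagesCommute α η] :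
    ((α ⊙ η) ∘ₗ S̃) ⋆[Δ̃] ((α ⊙ unitMap sH.ε) ⋆[Δ̃] (β ⊙ γ))
      = (unitMap sA.ε ⊙ (η ∘ₗ sH.S)) ⋆[Δ̃] (β ⊙ γ) := by
  have antipode_cancel : ((α ∘ₗ sA.S) ⊙ unitMap sH.ε) ⋆[Δ̃] (α ⊙ unitMap sH.ε)
      = (unitMap sA.ε : A →ₗ[k] R) ⊙ unitMap sH.ε := by
    rw [conv_bicrossΔ, hmp.leftCoaction.unitMap_conv, hmp.unitMap_conv_φ, sA.comp_S_conv,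
      sH.unitMap_conv]
  rw [tensorMul_comp_bicrossS, hmp.conv_bicrossΔ_assoc, ← hmp.conv_bicrossΔ_assoc _ _ (β ⊙ γ),
    antipode_cancel, hmp.unitMap_conv_bicrossΔ]

end IsHopfMatchedPair

section Compatibility

variable {k : Type*} [Field k] {A H R : Type*} [Ring A] [Algebra k A] [Ring H] [Algebra k H]
  [Semiring R] [Algebra k R] {sA : HopfStruct k A} {B : HopfBrace k H}
  {ρ ρ' : A →ₗ[k] H ⊗[k] A} {φ : H →ₗ[k] H ⊗[k] A}

local notation "Δ̃" => bicrossΔ k A H sA.Δ B.fst.Δ ρ φ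

local notation "S̃" => bicrossS k A H sA.S B.fst.S ρ φ

local notation "Δ̄" => bicrossΔ k A H sA.Δ B.snd.Δ ρ' (ι₁ k H A)

theorem IsComodCoalg.conv_smashΔ_conv_bicrossΔ (hρ' : IsComodCoalg k A H sA.Δ sA.ε ρ')
    (α₁ α₂ α₃ : A →ₗ[k] R) (η₁ η₂ η₃ : H →ₗ[k] R) [IsAlgHom ρ] [IsAlgHom φ] [IsAlgHom η₁]
    [IsAlgHom α₂] [IsAlgHom η₂] [IsAlgHom α₃] [IsAlgHom η₃] [ImagesCommute η₁ α₂]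
    [ImagesCommute η₁ η₂] [ImagesCommute η₁ α₃] [ImagesCommute η₁ η₃] [ImagesCommute α₂ η₂]
    [ImagesCommute α₂ α₃] [ImagesCommute η₂ α₃] [ImagesCommute η₂ η₃] [ImagesCommute α₃ η₃] :
    (α₁ ⊙ η₁) ⋆[Δ̄] (α₂ ⊙ η₂) ⋆[Δ̃] (α₃ ⊙ η₃)
      = (α₁ ⋆[sA.Δ] (η₁ ⋆[ρ'] α₂) ⋆[sA.Δ] η₁ ⋆[ρ'] η₂ ⋆[ρ] α₃) ⊙
        ((η₁ ⋆[B.snd.Δ] η₂ ⋆[φ] α₃) ⋆[B.fst.Δ] (η₁ ∘ₗ B.fst.S) ⋆[B.fst.Δ]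
          (η₁ ⋆[B.snd.Δ] η₃)) := by
  rw [conv_bicrossΔ, conv_smashΔ, hρ'.conv_conv, B.conv_conv]

variable (hmp : IsHopfMatchedPair k A H sA.Δ sA.ε B.fst.Δ B.fst.ε ρ φ)

include hmp

variable [IsMulCommutative H] [IsAlgHom ρ']

theorem IsHopfMatchedPair.conv_smashΔ_conv_comp_bicrossS_conv (α₁ α₂ α₃ : A →ₗ[k] R)
    (η₁ η₂ η₃ : H →ₗ[k] R) [IsAlgHom α₁] [IsAlgHom η₁] [IsAlgHom α₂] [IsAlgHom η₂] [IsAlgHom α₃]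
    [ImagesCommute α₁ η₁] [ImagesCommute η₁ α₂] [ImagesCommute η₁ η₂] [ImagesCommute η₁ α₃]
    [ImagesCommute η₂ α₃] :
    ((α₁ ⊙ η₁) ⋆[Δ̄] (α₂ ⊙ η₂)) ⋆[Δ̃] ((α₁ ⊙ η₁) ∘ₗ S̃) ⋆[Δ̃] ((α₁ ⊙ η₁) ⋆[Δ̄] (α₃ ⊙ η₃))
      = ((α₁ ⋆[sA.Δ] (η₁ ⋆[ρ'] α₂)) ⋆[sA.Δ]
          ((η₁ ⋆[B.snd.Δ] η₂) ⋆[B.fst.Δ] (η₁ ∘ₗ B.fst.S)) ⋆[ρ] (η₁ ⋆[ρ'] α₃)) ⊙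
        ((((η₁ ⋆[B.snd.Δ] η₂) ⋆[B.fst.Δ] (η₁ ∘ₗ B.fst.S)) ⋆[φ] (η₁ ⋆[ρ'] α₃)) ⋆[B.fst.Δ]
          (η₁ ⋆[B.snd.Δ] η₃)) := by
  have split_left : (α₁ ⋆[sA.Δ] (η₁ ⋆[ρ'] α₃)) ⊙ (η₁ ⋆[B.snd.Δ] η₃)
      = (α₁ ⊙ unitMap B.fst.ε) ⋆[Δ̃] ((η₁ ⋆[ρ'] α₃) ⊙ (η₁ ⋆[B.snd.Δ] η₃)) := by
    rw [conv_bicrossΔ, hmp.leftCoaction.unitMap_conv, hmp.unitMap_conv_φ, B.fst.unitMap_conv]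
  have conv_right : ((α₁ ⋆[sA.Δ] (η₁ ⋆[ρ'] α₂)) ⊙ (η₁ ⋆[B.snd.Δ] η₂)) ⋆[Δ̃]
        (unitMap sA.ε ⊙ (η₁ ∘ₗ B.fst.S))
      = (α₁ ⋆[sA.Δ] (η₁ ⋆[ρ'] α₂)) ⊙ ((η₁ ⋆[B.snd.Δ] η₂) ⋆[B.fst.Δ] (η₁ ∘ₗ B.fst.S)) := by
    rw [conv_bicrossΔ, hmp.conv_ρ_unitMap, hmp.rightCoaction.conv_unitMap, sA.conv_unitMap]
  rw [conv_smashΔ, conv_smashΔ, split_left, hmp.comp_bicrossS_conv, ← hmp.conv_bicrossΔ_assoc,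
    conv_right, conv_bicrossΔ]

theorem IsHopfMatchedPair.conv_smashΔ_conv_bicrossΔ_eq_iff
    (hρ' : IsComodCoalg k A H sA.Δ sA.ε ρ') (α₁ α₂ α₃ : A →ₗ[k] R) (η₁ η₂ η₃ : H →ₗ[k] R)
    [IsAlgHom α₁] [IsAlgHom η₁] [IsAlgHom α₂] [IsAlgHom η₂] [IsAlgHom α₃] [IsAlgHom η₃]
    [ImagesCommute α₁ η₁] [ImagesCommute α₁ α₂] [ImagesCommute α₁ η₂] [ImagesCommute α₁ α₃]
    [ImagesCommute η₁ α₂] [ImagesCommute η₁ η₂] [ImagesCommute η₁ α₃] [ImagesCommute η₁ η₃]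
    [ImagesCommute α₂ η₂] [ImagesCommute α₂ α₃] [ImagesCommute η₂ α₃] [ImagesCommute η₂ η₃]
    [ImagesCommute α₃ η₃] :
    (α₁ ⊙ η₁) ⋆[Δ̄] (α₂ ⊙ η₂) ⋆[Δ̃] (α₃ ⊙ η₃)
        = ((α₁ ⊙ η₁) ⋆[Δ̄] (α₂ ⊙ η₂)) ⋆[Δ̃] ((α₁ ⊙ η₁) ∘ₗ S̃) ⋆[Δ̃] ((α₁ ⊙ η₁) ⋆[Δ̄] (α₃ ⊙ η₃))
      ↔ (η₁ ⊙ η₂ ⊙ α₃) ∘ₗ TensorProduct.map LinearMap.id ρ ∘ₗ ρ'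
            = (η₁ ⊙ η₂ ⊙ α₃) ∘ₗ eq42RHS k A H B.fst.Δ B.snd.Δ B.fst.S ρ ρ'
        ∧ (η₁ ⊙ η₂ ⊙ α₃) ∘ₗ TensorProduct.map LinearMap.id φ ∘ₗ B.snd.Δ
            = (η₁ ⊙ η₂ ⊙ α₃) ∘ₗ eq43RHS k A H B.fst.Δ B.snd.Δ B.fst.S ρ' φ := by
  have := hmp.isAlgHom_ρ
  have := hmp.isAlgHom_φ
  rw [hρ'.conv_smashΔ_conv_bicrossΔ, hmp.conv_smashΔ_conv_comp_bicrossS_conv,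
    tensorMul_inj, sA.conv_assoc, sA.conv_left_inj, sA.conv_left_inj, ← B.fst.conv_assoc,
    B.fst.conv_right_inj, ← B.fst.eq_conv_iff_conv_comp_S_eq, tensorMul_comp_eq42RHS,
    tensorMul_comp_eq43RHS, tensorMul_comp_map_id_comp, tensorMul_comp_map_id_comp]

end Compatibility

/-- Proposition 4.3.  Let `A` be a Hopf algebra and
`(H, Δ, Δ')` a commutative Hopf brace (antipode `S` for `Δ`, `T` for `Δ'`).
Suppose `(A, H, ρ, φ)` is a Hopf matched pair (with `H` carrying `Δ`) and
`(A, ρ')` is a left `H_{Δ'}`-comodule bialgebra.  Let `Δ̃` be the bicrossed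
coproduct comultiplication of the matched pair on the tensor product algebra
`A ⊗ H` (with antipode `S̃`), and let `Δ̄` be the smash coproduct
comultiplication `Δ̄(a ⊗ h) = a_1 ⊗ a_{2(-1)'} h_{1'} ⊗ a_{2(0)'} ⊗ h_{2'}` on
`A ⊗ H_{Δ'}`.  Then `(A ⋈ H, Δ̃, Δ̄)` is a Hopf brace — i.e. the compatibility
condition (2.1) holds for the pair `(Δ̃, Δ̄)` — if and only if (4.2):
`a_{(-1)'} ⊗ a_{(0)'(-1)} ⊗ a_{(0)'(0)}
  = a_{(-1)11'} S(a_{(-1)2}) a_{(0)(-1)'} ⊗ a_{(-1)12'} ⊗ a_{(0)(0)'}`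
and (4.3):
`h_{1'} ⊗ h_{2'[0]} ⊗ h_{2'[1]}
  = h_{1[0]11'} S(h_{1[0]2}) h_{1[1](-1)'} h_2 ⊗ h_{1[0]12'} ⊗ h_{1[1](0)'}`
hold for all `a ∈ A`, `h ∈ H`. -/
theorem proposition_4_3 {k : Type*} [Field k]
    {A H : Type*} [Ring A] [Algebra k A] [Ring H] [Algebra k H]
    (sA : HopfStruct k A)
    (HBH : HopfBrace k H)
    (hHcomm : ∀ x y : H, x * y = y * x)
    (ρ ρ' : A →ₗ[k] H ⊗[k] A) (φ : H →ₗ[k] H ⊗[k] A)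
    -- `(A, H, ρ, φ)` is a Hopf matched pair, with `H` carrying `Δ`
    (hmp : IsHopfMatchedPair k A H sA.Δ sA.ε HBH.fst.Δ HBH.fst.ε ρ φ)
    -- `(A, ρ')` is a left `H_{Δ'}`-comodule bialgebra
    (hρ'coact : LeftCoaction k A H HBH.snd.Δ HBH.snd.ε ρ')
    (hρ'alg : IsAlgebraMorphism k A (H ⊗[k] A) ρ')
    (hρ'coalg : IsComodCoalg k A H sA.Δ sA.ε ρ') :
    (∀ w : A ⊗[k] H,
      braceLHS k (A ⊗[k] H) (bicrossΔ k A H sA.Δ HBH.fst.Δ ρ φ)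
          (bicrossΔ k A H sA.Δ HBH.snd.Δ ρ' (ι₁ k H A)) w
        = braceRHS k (A ⊗[k] H) (bicrossΔ k A H sA.Δ HBH.fst.Δ ρ φ)
            (bicrossΔ k A H sA.Δ HBH.snd.Δ ρ' (ι₁ k H A))
            (bicrossS k A H sA.S HBH.fst.S ρ φ) w)
      ↔ ((∀ a : A,
            (TensorProduct.map (LinearMap.id : H →ₗ[k] H) ρ) (ρ' a)
              = eq42RHS k A H HBH.fst.Δ HBH.snd.Δ HBH.fst.S ρ ρ' a) ∧
         (∀ h : H,
            (TensorProduct.map (LinearMap.id : H →ₗ[k] H) φ) (HBH.snd.Δ h)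
              = eq43RHS k A H HBH.fst.Δ HBH.snd.Δ HBH.fst.S ρ' φ h)) := by
  have : IsMulCommutative H := ⟨⟨hHcomm⟩⟩
  have := hρ'alg.isAlgHom
  simp only [← LinearMap.comp_apply, ← LinearMap.ext_iff]
  constructor
  · intro hbrace
    have on_generators := conv_conv_of_braceLHS_eq_braceRHS hbrace
      (unitMap sA.ε ⊙ leg₁ k H H A) (unitMap sA.ε ⊙ leg₂ k H H A)
      (leg₃ k H H A ⊙ unitMap HBH.fst.ε)
    rwa [hmp.conv_smashΔ_conv_bicrossΔ_eq_iff hρ'coalg, tensorMul_legs, LinearMap.id_comp,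
      LinearMap.id_comp, LinearMap.id_comp, LinearMap.id_comp] at on_generators
  · rintro ⟨eq42, eq43⟩
    rw [braceLHS_eq_braceRHS_iff_conv_legs]
    set W := A ⊗[k] H
    rw [← comp_ι₁_tensorMul_comp_ι₂ (leg₁ k W W W), ← comp_ι₁_tensorMul_comp_ι₂ (leg₂ k W W W),
      ← comp_ι₁_tensorMul_comp_ι₂ (leg₃ k W W W), hmp.conv_smashΔ_conv_bicrossΔ_eq_iff hρ'coalg,
      eq42, eq43]
    exact ⟨rfl, rfl⟩

end HopfPaper
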